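/- arXiv:1410.1669 — 2 statements merged into one kernel-verified Lean document; each statement's English description precedes it below -/
import Mathlib

section
/- For any finite simple graph G of order n with minimum degree δ such that δ̂ := δ − max{k,l} + 1 > 0, the parametric domination number satisfies γ_{k,l}(G) ≤ (1 − δ̂ / ((1+δ̂)^{1+1/δ̂} · (b_{k−1} + b_{l−2})^{1/δ̂})) · n, where b_t = C(δ, t) and b_{−1} = 0. -/
open Finset Real

/-- The parametric domination number γ_{k,l}: the minimum cardinality of a set D such that
every vertex outside D has at least k members of D in its closed neighbourhood, and every
vertex of D has at least l members of D in its closed neighbourhood. -/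
noncomputable def paramDomNum {V : Type*} [Fintype V] [DecidableEq V]
    (G : SimpleGraph V) [DecidableRel G.Adj] (k l : ℕ) : ℕ :=
  sInf {m : ℕ | ∃ D : Finset V,
    (∀ v, v ∉ D → k ≤ ((insert v (G.neighborFinset v)) ∩ D).card) ∧
    (∀ v, v ∈ D → l ≤ ((insert v (G.neighborFinset v)) ∩ D).card) ∧
    m = D.card}


lemma pd_weight {V : Type*} [Fintype V] [DecidableEq V] (p q : ℝ) (hpq : p + q = 1)
    (T : Finset V) :
    ∑ A : Finset V, (p ^ A.card * q ^ (Fintype.card V - A.card)) *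
      (if Disjoint T A then (1 : ℝ) else 0) = q ^ T.card := by
  have h := Finset.sum_pow_mul_eq_add_pow p q (Tᶜ)
  rw [hpq, one_pow] at h
  simp only [mul_ite, mul_one, mul_zero]
  rw [← Finset.sum_filter]
  have hf : (Finset.univ.filter fun A : Finset V => Disjoint T A) = (Tᶜ).powerset := by
    ext A
    simp only [mem_filter, mem_univ, true_and, mem_powerset]
    rw [disjoint_comm]
    exact Finset.subset_compl_iff_disjoint_right.symm
  rw [hf]
  have : ∀ A ∈ (Tᶜ).powerset, p ^ A.card * q ^ (Fintype.card V - A.card)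
      = q ^ T.card * (p ^ A.card * q ^ ((Tᶜ).card - A.card)) := by
    intro A hA
    have h1 := Finset.card_le_card (mem_powerset.mp hA)
    have h2 := Finset.card_add_card_compl T
    have : Fintype.card V - A.card = T.card + ((Tᶜ).card - A.card) := by omega
    rw [this, pow_add]; ring
  rw [Finset.sum_congr rfl this, ← Finset.mul_sum, h, mul_one]

lemma pd_average {V : Type*} [Fintype V] [DecidableEq V] (p q : ℝ) (hpq : p + q = 1)
    (hp : 0 ≤ p) (hq : 0 ≤ q) (F : V → Finset (Finset V)) (m : ℕ) (b : ℝ) (g : ℕ)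
    (hm : ∀ v, ∀ T ∈ F v, m ≤ T.card) (hb : ∀ v, ((F v).card : ℝ) ≤ b)
    (hg : ∀ A : Finset V, g ≤ A.card + ∑ v, ((F v).filter fun T => Disjoint T A).card) :
    (g : ℝ) ≤ (p + b * q ^ m) * Fintype.card V := by
  have hq1 : q ≤ 1 := by linarith
  set W : Finset V → ℝ := fun A => p ^ A.card * q ^ (Fintype.card V - A.card) with hW
  have hW0 : ∀ A, 0 ≤ W A := fun A => by positivity
  have hw := pd_weight (V := V) p q hpq
  have h1 : ∑ A, W A = 1 := by
    have := hw ∅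
    simpa using this
  have h2 : ∀ A : Finset V, (g : ℝ) ≤ ∑ v : V, (1 - (if Disjoint {v} A then (1 : ℝ) else 0)
      + ∑ T ∈ F v, (if Disjoint T A then (1 : ℝ) else 0)) := by
    intro A
    have h := hg A
    have h' : (g : ℝ) ≤ A.card + ∑ v, (((F v).filter fun T => Disjoint T A).card : ℝ) := by
      exact_mod_cast h
    refine h'.trans (le_of_eq ?_)
    rw [Finset.sum_add_distrib]
    congr 1
    · have : ∀ v : V, (1 - (if Disjoint {v} A then (1 : ℝ) else 0)) = if v ∈ A then 1 else 0 := by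
        intro v
        by_cases hv : v ∈ A <;> simp [hv]
      rw [Finset.sum_congr rfl fun v _ => this v]
      simp
    · refine Finset.sum_congr rfl fun v _ => ?_
      simp
  calc (g : ℝ) = ∑ A, W A * g := by rw [← Finset.sum_mul, h1, one_mul]
    _ ≤ ∑ A, W A * ∑ v : V, (1 - (if Disjoint {v} A then (1 : ℝ) else 0)
      + ∑ T ∈ F v, (if Disjoint T A then (1 : ℝ) else 0)) :=
        Finset.sum_le_sum fun A _ => mul_le_mul_of_nonneg_left (h2 A) (hW0 A)
    _ = ∑ v : V, (1 - q ^ 1 + ∑ T ∈ F v, q ^ T.card) := by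
        simp only [Finset.mul_sum]
        rw [Finset.sum_comm]
        refine Finset.sum_congr rfl fun v _ => ?_
        simp only [mul_add, mul_sub, mul_one, Finset.sum_add_distrib, Finset.sum_sub_distrib, h1,
          Finset.mul_sum]
        rw [Finset.sum_comm]
        have e1 := hw {v}
        rw [Finset.card_singleton] at e1
        rw [e1]
        congr 1
        exact Finset.sum_congr rfl fun T _ => hw T
    _ ≤ ∑ v : V, (p + b * q ^ m) := by
        refine Finset.sum_le_sum fun v _ => ?_
        have : ∑ T ∈ F v, q ^ T.card ≤ ∑ T ∈ F v, q ^ m :=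
          Finset.sum_le_sum fun T hT => pow_le_pow_of_le_one hq hq1 (hm v T hT)
        rw [Finset.sum_const, nsmul_eq_mul] at this
        have h3 := mul_le_mul_of_nonneg_right (hb v) (pow_nonneg hq m)
        rw [pow_one]; linarith
    _ = _ := by rw [Finset.sum_const, nsmul_eq_mul, Finset.card_univ, mul_comm]

lemma pd_deficit {V : Type*} [DecidableEq V] (N A : Finset V) (r : ℕ)
    (hr : r ≤ N.card) :
    ∃ S : Finset V, S.card ≤ ((N.powersetCard (N.card + 1 - r)).filter
      fun T => Disjoint T A).card ∧ r ≤ (N ∩ (A ∪ S)).card := by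
  have hc := Finset.card_sdiff_add_card_inter N A
  by_cases hi : r ≤ (N ∩ A).card
  · exact ⟨∅, by simp, by simpa using hi⟩
  push Not at hi
  obtain ⟨S, hS, hSc⟩ := Finset.exists_subset_card_eq
    (s := N \ A) (n := r - (N ∩ A).card) (by omega)
  refine ⟨S, ?_, ?_⟩
  · have hsub : (N \ A).powersetCard (N.card + 1 - r) ⊆
      (N.powersetCard (N.card + 1 - r)).filter fun T => Disjoint T A := by
      intro T hT
      rw [mem_powersetCard] at hT
      rw [mem_filter, mem_powersetCard]
      exact ⟨⟨hT.1.trans sdiff_subset, hT.2⟩, Finset.disjoint_of_subset_left hT.1 sdiff_disjoint⟩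
    refine le_trans ?_ (Finset.card_le_card hsub)
    rw [card_powersetCard, hSc]
    obtain ⟨j, hj⟩ : ∃ j, r - (N ∩ A).card = j + 1 := ⟨r - (N ∩ A).card - 1, by omega⟩
    have e : (N \ A).card = (N.card + 1 - r) + j := by omega
    rw [hj, e, Nat.choose_symm_add]
    calc j + 1 = (j+1).choose j := by simp
      _ ≤ _ := Nat.choose_le_choose j (by omega)
  · have : (N ∩ A) ∪ S ⊆ N ∩ (A ∪ S) := by
      intro x hx
      have := @hS x
      simp only [mem_union, mem_inter, mem_sdiff] at *
      tauto
    refine le_trans ?_ (Finset.card_le_card this)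
    rw [Finset.card_union_of_disjoint]
    · omega
    · exact Finset.disjoint_of_subset_right hS
        (Finset.disjoint_of_subset_left inter_subset_right disjoint_sdiff)

lemma pd_repair {V : Type*} [Fintype V] [DecidableEq V]
    (G : SimpleGraph V) [DecidableRel G.Adj] (k l : ℕ) (N : V → Finset V)
    (hN : ∀ v, N v ⊆ G.neighborFinset v) (A : Finset V) (c : V → ℕ)
    (h : ∀ v, ∃ S : Finset V, S.card ≤ c v ∧ (v ∉ A → k ≤ (N v ∩ (A ∪ S)).card) ∧
      l - 1 ≤ (N v ∩ (A ∪ S)).card) :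
    paramDomNum G k l ≤ A.card + ∑ v, c v := by
  choose S hS1 hS2 hS3 using h
  have hle : ∀ v, N v ∩ (A ∪ S v) ⊆ G.neighborFinset v ∩ (A ∪ Finset.univ.biUnion S) := by
    intro v
    refine Finset.inter_subset_inter (hN v) (Finset.union_subset_union_right ?_)
    exact Finset.subset_biUnion_of_mem S (mem_univ v)
  have hcard : (A ∪ Finset.univ.biUnion S).card ≤ A.card + ∑ v, c v :=
    (Finset.card_union_le _ _).trans (Nat.add_le_add_left
      (Finset.card_biUnion_le.trans (Finset.sum_le_sum fun v _ => hS1 v)) _)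
  refine le_trans (Nat.sInf_le ⟨A ∪ Finset.univ.biUnion S, ?_, ?_, rfl⟩) hcard
  · intro v hv
    have hvA : v ∉ A := fun h => hv (mem_union_left _ h)
    refine (hS2 v hvA).trans (Finset.card_le_card ((hle v).trans ?_))
    exact Finset.inter_subset_inter_right (Finset.subset_insert _ _)
  · intro v hv
    rw [Finset.insert_inter_of_mem hv, Finset.card_insert_of_notMem (by simp)]
    have := (hS3 v).trans (Finset.card_le_card (hle v))
    omega

lemma pd_main {V : Type*} [Fintype V] [DecidableEq V]
    (G : SimpleGraph V) [DecidableRel G.Adj] (k l δ : ℕ) (hk : 1 ≤ k) (hl : 1 ≤ l)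
    (hδ : δ = G.minDegree) (hkd : k ≤ δ) (hld : l ≤ δ) (p q : ℝ) (hpq : p + q = 1)
    (hp : 0 ≤ p) (hq : 0 ≤ q)
    (b : ℝ) (hb : b = (δ.choose (k - 1) : ℕ) + if 2 ≤ l then (δ.choose (l - 2) : ℕ) else 0) :
    (paramDomNum G k l : ℝ) ≤ (p + b * q ^ (δ + 2 - max k l)) * Fintype.card V := by
  have hex : ∀ v, ∃ N : Finset V, N ⊆ G.neighborFinset v ∧ N.card = δ := by
    intro v
    apply Finset.exists_subset_card_eq
    rw [hδ]
    simpa using G.minDegree_le_degree v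
  choose N hN hNc using hex
  have hNv : ∀ v, v ∉ N v := fun v h => by simpa using hN v h
  have hck : δ.choose (δ + 1 - k) = δ.choose (k - 1) := by
    rw [← Nat.choose_symm (by omega : k - 1 ≤ δ)]; congr 1; omega
  rcases le_or_gt l k with hlk | hlk
  · refine pd_average p q hpq hp hq (fun v => ((N v).powersetCard (δ + 1 - k)).image (insert v) ∪
      if 2 ≤ l then (N v).powersetCard (δ + 2 - l) else ∅) _ b _ ?_ ?_ ?_
    · intro v T hT
      rw [mem_union] at hT
      rcases hT with hT | hT
      · obtain ⟨T', hT', rfl⟩ := mem_image.mp hT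
        rw [mem_powersetCard] at hT'
        rw [Finset.card_insert_of_notMem fun h => hNv v (hT'.1 h)]
        omega
      · split_ifs at hT with h2
        · rw [mem_powersetCard] at hT
          omega
        · simp at hT
    · intro v
      have h1 := Finset.card_union_le (((N v).powersetCard (δ + 1 - k)).image (insert v))
        (if 2 ≤ l then (N v).powersetCard (δ + 2 - l) else ∅)
      have h2 : (((N v).powersetCard (δ + 1 - k)).image (insert v)).card ≤ δ.choose (k - 1) := by
        refine Finset.card_image_le.trans ?_
        rw [card_powersetCard, hNc, hck]
      have h3 : (if 2 ≤ l then (N v).powersetCard (δ + 2 - l) else ∅).card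
          ≤ if 2 ≤ l then δ.choose (l - 2) else 0 := by
        split_ifs with h
        · rw [card_powersetCard, hNc, ← Nat.choose_symm (by omega : l - 2 ≤ δ)]
          apply le_of_eq; congr 1; omega
        · simp
      rw [hb]
      exact_mod_cast h1.trans (add_le_add h2 h3)
    · intro A
      refine pd_repair G k l N hN A _ fun v => ?_
      by_cases hv : v ∈ A
      · by_cases h2 : 2 ≤ l
        · obtain ⟨S, hS, hr⟩ := pd_deficit (N v) A (l - 1) (by rw [hNc]; omega)
          refine ⟨S, hS.trans (Finset.card_le_card ?_), fun h => absurd hv h, hr⟩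
          apply Finset.filter_subset_filter
          rw [if_pos h2, hNc, show δ + 1 - (l - 1) = δ + 2 - l by omega]
          exact subset_union_right
        · exact ⟨∅, by simp, fun h => absurd hv h, by omega⟩
      · obtain ⟨S, hS, hr⟩ := pd_deficit (N v) A k (by rw [hNc]; omega)
        refine ⟨S, hS.trans ?_, fun _ => hr, by omega⟩
        rw [hNc]
        refine Finset.card_le_card_of_injOn (insert v) ?_ ?_
        · intro T hT
          have hT := mem_filter.mp (mem_coe.mp hT)
          refine mem_coe.mpr (mem_filter.mpr ⟨mem_union_left _ (mem_image_of_mem _ hT.1), ?_⟩)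
          exact Finset.disjoint_insert_left.mpr ⟨hv, hT.2⟩
        · intro T hT T' hT' he
          have hT := (mem_powersetCard.mp (mem_filter.mp (mem_coe.mp hT)).1).1
          have hT' := (mem_powersetCard.mp (mem_filter.mp (mem_coe.mp hT')).1).1
          have h1 : v ∉ T := fun h => hNv v (hT h)
          have h2 : v ∉ T' := fun h => hNv v (hT' h)
          have := congrArg (fun X => Finset.erase X v) he
          simpa [h1, h2] using this
  · refine pd_average p q hpq hp hq (fun v => (N v).powersetCard (δ + 2 - l)) _ b _ ?_ ?_ ?_
    · intro v T hT
      rw [mem_powersetCard] at hT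
      omega
    · intro v
      rw [card_powersetCard, hNc, hb, if_pos (by omega : 2 ≤ l),
        ← Nat.choose_symm (by omega : l - 2 ≤ δ), show δ - (l - 2) = δ + 2 - l by omega]
      have : (0 : ℝ) ≤ (δ.choose (k - 1) : ℕ) := Nat.cast_nonneg _
      linarith
    · intro A
      refine pd_repair G k l N hN A _ fun v => ?_
      obtain ⟨S, hS, hr⟩ := pd_deficit (N v) A (l - 1) (by rw [hNc]; omega)
      refine ⟨S, hS.trans (le_of_eq ?_), fun _ => by omega, hr⟩
      rw [hNc, show δ + 1 - (l - 1) = δ + 2 - l by omega]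

theorem param_domination_bound_two
    {V : Type*} [Fintype V] [DecidableEq V]
    (G : SimpleGraph V) [DecidableRel G.Adj]
    (n : ℕ) (hn : n = Fintype.card V)
    (δ : ℕ) (hδ : δ = G.minDegree)
    (k l : ℕ) (hk : 1 ≤ k) (hl : 1 ≤ l)
    (dh : ℝ) (hdh : dh = (δ : ℝ) - max k l + 1) (hpos : 0 < dh)
    (b : ℝ) (hb : b = (δ.choose (k - 1) : ℕ) + if 2 ≤ l then (δ.choose (l - 2) : ℕ) else 0) :
    (paramDomNum G k l : ℝ) ≤
      (1 - dh / ((1 + dh) ^ (1 + 1 / dh) * b ^ (1 / dh))) * n := by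
  have hmax : max k l ≤ δ := by
    have h : ((max k l : ℕ) : ℝ) < ((δ + 1 : ℕ) : ℝ) := by
      push_cast at hdh ⊢
      linarith
    have := Nat.cast_lt.mp h
    omega
  have hkd : k ≤ δ := (le_max_left _ _).trans hmax
  have hld : l ≤ δ := (le_max_right _ _).trans hmax
  obtain ⟨d, hd⟩ : ∃ d : ℕ, d = δ + 1 - max k l := ⟨_, rfl⟩
  have hdd : dh = (d : ℝ) := by
    have : d + max k l = δ + 1 := by omega
    have : ((d + max k l : ℕ) : ℝ) = ((δ + 1 : ℕ) : ℝ) := by rw [this]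
    push_cast at this hdh
    linarith
  have hb1 : 1 ≤ b := by
    have h1 : (1 : ℝ) ≤ (δ.choose (k - 1) : ℕ) := by
      exact_mod_cast Nat.choose_pos (by omega : k - 1 ≤ δ)
    have h2 : (0 : ℝ) ≤ ((if 2 ≤ l then (δ.choose (l - 2) : ℕ) else 0 : ℕ) : ℝ) :=
      Nat.cast_nonneg _
    rw [hb]
    push_cast at h2 ⊢
    linarith
  set X : ℝ := (b * (1 + dh)) ^ (1 / dh) with hX
  have hb0 : 0 < b := by linarith
  have hbd : 1 ≤ b * (1 + dh) := by nlinarith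
  have hX1 : 1 ≤ X := Real.one_le_rpow hbd (by positivity)
  have hXd : X ^ d = b * (1 + dh) := by
    rw [hX, ← Real.rpow_natCast, ← hdd, ← Real.rpow_mul (by positivity),
      one_div_mul_cancel hpos.ne', Real.rpow_one]
  have hden : (1 + dh) ^ (1 + 1 / dh) * b ^ (1 / dh) = (1 + dh) * X := by
    rw [hX, Real.rpow_add (by positivity), Real.rpow_one, Real.mul_rpow hb0.le (by positivity)]
    ring
  have hX0 : 0 < X := by linarith
  have hmain := pd_main G k l δ hk hl hδ hkd hld (1 - X⁻¹) X⁻¹ (by ring)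
    (by linarith [inv_le_one_of_one_le₀ hX1]) (by positivity) b hb
  rw [← hn, show δ + 2 - max k l = d + 1 by omega] at hmain
  refine hmain.trans (le_of_eq ?_)
  congr 1
  rw [hden, inv_pow, pow_succ, hXd]
  have : 0 < 1 + dh := by linarith
  field_simp
  ring
end

section
/- For any finite simple graph G of order n with minimum degree δ and any integer k ≥ 1: if δ̄ := δ − k > 0 then the total k-domination number satisfies γ_k^t(G) ≤ (1 − δ̄ / ((1+δ̄)^{1+1/δ̄} · b_{k−1}^{1/δ̄})) · n, and if δ ≥ k then γ_k^t(G) ≤ ((ln(δ − k + 1) + ln b_{k−1} + 1)/(δ − k + 1)) · n, where b_{k−1} = C(δ, k−1). -/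
open Finset Real

/-- The total k-domination number: the minimum cardinality of a set X such that every
vertex has at least k neighbours in X. -/
noncomputable def totalKDomNum {V : Type*} [Fintype V] [DecidableEq V]
    (G : SimpleGraph V) [DecidableRel G.Adj] (k : ℕ) : ℕ :=
  sInf {m : ℕ | ∃ X : Finset V,
    (∀ v, k ≤ (G.neighborFinset v ∩ X).card) ∧ m = X.card}

lemma le_choose_aux (d m : ℕ) : m ≤ (d + m).choose (d + 1) := by
  induction d with
  | zero => simp
  | succ d ih =>
    have h : d + 1 + m = (d + m) + 1 := by omega
    rw [h, Nat.choose_succ_succ]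
    omega

lemma weight_sum {V : Type*} [Fintype V] [DecidableEq V] (q : ℝ) (T : Finset V) :
    ∑ X : Finset V, ((1 - q) ^ X.card * q ^ (Fintype.card V - X.card)) *
      (if Disjoint T X then (1 : ℝ) else 0) = q ^ T.card := by
  have h1 : ∑ X : Finset V, ((1 - q) ^ X.card * q ^ (Fintype.card V - X.card)) *
      (if Disjoint T X then (1 : ℝ) else 0)
      = ∑ X ∈ Tᶜ.powerset, ((1 - q) ^ X.card * q ^ (Fintype.card V - X.card)) := by
    simp only [mul_ite, mul_one, mul_zero]
    rw [← Finset.sum_filter]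
    apply Finset.sum_congr _ (fun _ _ => rfl)
    ext X
    simp only [Finset.mem_filter, Finset.mem_univ, true_and, Finset.mem_powerset]
    rw [disjoint_comm]
    exact (le_compl_iff_disjoint_right (a := X) (b := T)).symm
  rw [h1]
  have h2 : ∀ X ∈ Tᶜ.powerset, ((1 - q) ^ X.card * q ^ (Fintype.card V - X.card))
      = ((1 - q) ^ X.card * q ^ (Tᶜ.card - X.card)) * q ^ T.card := by
    intro X hX
    have h3 := Finset.card_le_card (Finset.mem_powerset.1 hX)
    have h4 := Finset.card_compl_add_card T
    rw [mul_assoc, ← pow_add]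
    congr 2
    omega
  rw [Finset.sum_congr rfl h2, ← Finset.sum_mul, Finset.sum_pow_mul_eq_add_pow]
  simp

lemma exists_good {V : Type*} [Fintype V] [DecidableEq V] (N : V → Finset V) (δ e : ℕ)
    (hN : ∀ v, (N v).card = δ) (q : ℝ) (hq0 : 0 ≤ q) (hq1 : q ≤ 1) :
    ∃ X : Finset V, (X.card : ℝ) + ∑ v, ((N v \ X).card.choose e : ℝ) ≤
      (1 - q + (δ.choose e : ℝ) * q ^ e) * Fintype.card V := by
  set w : Finset V → ℝ := fun X => (1 - q) ^ X.card * q ^ (Fintype.card V - X.card) with hw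
  have hw0 : ∀ X, 0 ≤ w X := fun X => by
    have : 0 ≤ 1 - q := by linarith
    positivity
  have hwT : ∀ T : Finset V, ∑ X, w X * (if Disjoint T X then (1 : ℝ) else 0) = q ^ T.card :=
    weight_sum q
  have hw1 : ∑ X, w X = 1 := by simpa using hwT ∅
  set F : Finset V → ℝ := fun X => (X.card : ℝ) + ∑ v, ((N v \ X).card.choose e : ℝ) with hF
  set B : ℝ := (1 - q + (δ.choose e : ℝ) * q ^ e) * Fintype.card V with hB
  have hcard : ∀ X : Finset V, (X.card : ℝ) =
      Fintype.card V - ∑ v, (if Disjoint ({v} : Finset V) X then (1 : ℝ) else 0) := by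
    intro X
    have h := Finset.card_compl_add_card X
    have h' : ∑ v, (if Disjoint ({v} : Finset V) X then (1 : ℝ) else 0) = Xᶜ.card := by
      rw [Finset.sum_boole]
      congr 2
      ext v; simp
    rw [h', ← h]; push_cast; ring
  have hch : ∀ (X : Finset V) v, ((N v \ X).card.choose e : ℝ) =
      ∑ T ∈ (N v).powersetCard e, (if Disjoint T X then (1 : ℝ) else 0) := by
    intro X v
    rw [Finset.sum_boole, ← Finset.card_powersetCard]
    congr 2
    ext T
    simp only [Finset.mem_powersetCard, Finset.mem_filter, Finset.subset_sdiff]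
    tauto
  have hE : ∑ X, w X * F X = B := by
    have h1 : ∀ X, w X * F X = w X * Fintype.card V
        - ∑ v, w X * (if Disjoint ({v} : Finset V) X then (1 : ℝ) else 0)
        + ∑ v, ∑ T ∈ (N v).powersetCard e, w X * (if Disjoint T X then (1 : ℝ) else 0) := by
      intro X
      simp only [hF]
      rw [hcard X]
      simp only [hch, ← Finset.mul_sum]
      ring
    simp only [h1]
    rw [Finset.sum_add_distrib, Finset.sum_sub_distrib, ← Finset.sum_mul, hw1]
    rw [Finset.sum_comm]
    have h2 : ∑ X, ∑ v, ∑ T ∈ (N v).powersetCard e, w X * (if Disjoint T X then (1 : ℝ) else 0)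
        = ∑ v : V, (δ.choose e : ℝ) * q ^ e := by
      rw [Finset.sum_comm]
      apply Finset.sum_congr rfl
      intro v _
      rw [Finset.sum_comm]
      simp only [hwT]
      rw [Finset.sum_congr rfl (g := fun _ => q ^ e)
        (fun T hT => by rw [(Finset.mem_powersetCard.1 hT).2])]
      simp [hN]
    rw [h2]
    simp only [hwT]
    simp [hB]
    ring
  by_contra hcon
  push Not at hcon
  have h3 : ∃ X, 0 < w X := by
    by_contra h
    push Not at h
    have : ∑ X, w X ≤ 0 := Finset.sum_nonpos (fun X _ => h X)
    linarith
  obtain ⟨X0, hX0⟩ := h3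
  have h4 : ∑ X, w X * B < ∑ X, w X * F X := by
    apply Finset.sum_lt_sum
    · intro X _
      exact mul_le_mul_of_nonneg_left (hcon X).le (hw0 X)
    · exact ⟨X0, Finset.mem_univ _, mul_lt_mul_of_pos_left (hcon X0) hX0⟩
  rw [← Finset.sum_mul, hw1, hE] at h4
  linarith

lemma key_bound {V : Type*} [Fintype V] [DecidableEq V]
    (G : SimpleGraph V) [DecidableRel G.Adj] (k : ℕ) (hk : 1 ≤ k) (hkδ : k ≤ G.minDegree)
    (q : ℝ) (hq0 : 0 ≤ q) (hq1 : q ≤ 1) :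
    (totalKDomNum G k : ℝ) ≤
      (1 - q + (G.minDegree.choose (k - 1) : ℝ) * q ^ (G.minDegree - k + 1)) * Fintype.card V := by
  have hN : ∀ v, ∃ N ⊆ G.neighborFinset v, N.card = G.minDegree := fun v =>
    Finset.exists_subset_card_eq (by
      rw [SimpleGraph.card_neighborFinset_eq_degree]; exact G.minDegree_le_degree v)
  choose N hNs hNc using hN
  obtain ⟨X, hX⟩ := exists_good N G.minDegree (G.minDegree - k + 1) hNc q hq0 hq1
  have hsymm : G.minDegree.choose (G.minDegree - k + 1) = G.minDegree.choose (k - 1) :=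
    Nat.choose_symm_of_eq_add (by omega)
  rw [hsymm] at hX
  refine le_trans ?_ hX
  have hA : ∀ v, ∃ A : Finset V, k ≤ (G.neighborFinset v ∩ (X ∪ A)).card ∧
      A.card ≤ (N v \ X).card.choose (G.minDegree - k + 1) := by
    intro v
    have hc := Finset.card_sdiff_add_card_inter (N v) X
    rw [hNc v] at hc
    obtain ⟨A, hAs, hAc⟩ := Finset.exists_subset_card_eq
      (s := N v \ X) (n := k - (N v ∩ X).card) (by omega)
    refine ⟨A, ?_, ?_⟩
    · have hd : Disjoint (N v ∩ X) A := by
        rw [Finset.disjoint_left]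
        intro a ha ha'
        exact (Finset.mem_sdiff.1 (hAs ha')).2 (Finset.mem_inter.1 ha).2
      have hsub : (N v ∩ X) ∪ A ⊆ G.neighborFinset v ∩ (X ∪ A) := by
        intro a ha
        rcases Finset.mem_union.1 ha with h | h
        · exact Finset.mem_inter.2 ⟨hNs v (Finset.mem_inter.1 h).1,
            Finset.mem_union_left _ (Finset.mem_inter.1 h).2⟩
        · exact Finset.mem_inter.2 ⟨hNs v (Finset.mem_sdiff.1 (hAs h)).1,
            Finset.mem_union_right _ h⟩
      have := Finset.card_le_card hsub
      rw [Finset.card_union_of_disjoint hd] at this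
      omega
    · rw [hAc]
      by_cases hi : k ≤ (N v ∩ X).card
      · simp [Nat.sub_eq_zero_of_le hi]
      · have h5 : (N v \ X).card = (G.minDegree - k) + (k - (N v ∩ X).card) := by omega
        rw [h5]
        exact le_choose_aux _ _
  choose A hA1 hA2 using hA
  have h6 : totalKDomNum G k ≤ (X ∪ Finset.univ.biUnion A).card := by
    apply Nat.sInf_le
    refine ⟨_, fun v => (hA1 v).trans (Finset.card_le_card ?_), rfl⟩
    apply Finset.inter_subset_inter_left
    apply Finset.union_subset_union_right
    exact Finset.subset_biUnion_of_mem A (Finset.mem_univ v)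
  have h7 : totalKDomNum G k ≤
      X.card + ∑ v, (N v \ X).card.choose (G.minDegree - k + 1) :=
    h6.trans ((Finset.card_union_le _ _).trans (Nat.add_le_add_left
      (Finset.card_biUnion_le.trans (Finset.sum_le_sum fun v _ => hA2 v)) _))
  exact_mod_cast h7

theorem total_k_domination_bounds
    {V : Type*} [Fintype V] [DecidableEq V]
    (G : SimpleGraph V) [DecidableRel G.Adj]
    (n : ℕ) (hn : n = Fintype.card V)
    (δ : ℕ) (hδ : δ = G.minDegree)
    (k : ℕ) (hk : 1 ≤ k)
    (b : ℝ) (hb : b = (δ.choose (k - 1) : ℕ)) :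
    ((0 : ℝ) < (δ : ℝ) - k →
      (totalKDomNum G k : ℝ) ≤
        (1 - ((δ : ℝ) - k) /
          ((1 + ((δ : ℝ) - k)) ^ (1 + 1 / ((δ : ℝ) - k)) * b ^ (1 / ((δ : ℝ) - k)))) * n) ∧
    (k ≤ δ →
      (totalKDomNum G k : ℝ) ≤
        ((Real.log ((δ : ℝ) - k + 1) + Real.log b + 1) / ((δ : ℝ) - k + 1)) * n) := by
  subst hn hδ
  have hbpos : k ≤ G.minDegree → 1 ≤ b := by
    intro h
    rw [hb]
    exact_mod_cast Nat.choose_pos (by omega)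
  have key : k ≤ G.minDegree → ∀ q : ℝ, 0 ≤ q → q ≤ 1 → (totalKDomNum G k : ℝ) ≤
      (1 - q + b * q ^ (G.minDegree - k + 1)) * Fintype.card V := by
    intro h q h0 h1
    rw [hb]
    exact key_bound G k hk h q h0 h1
  have hcast : k ≤ G.minDegree → ((G.minDegree - k : ℕ) : ℝ) = (G.minDegree : ℝ) - k :=
    fun h => by push_cast [h]; ring
  constructor
  · intro hpos
    have hlt : k ≤ G.minDegree := by
      have : (k : ℝ) ≤ G.minDegree := by linarith
      exact_mod_cast this
    have hb1 := hbpos hlt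
    have hk' := key hlt
    rw [← hcast hlt] at hpos ⊢
    generalize G.minDegree - k = d at *
    have hd0 : (d : ℝ) ≠ 0 := hpos.ne'
    have hd0' : d ≠ 0 := by exact_mod_cast hd0
    have hc1 : (1 : ℝ) ≤ (1 + d) * b := by nlinarith
    have hc0 : (0 : ℝ) < (1 + d) * b := by linarith
    set r : ℝ := ((1 + (d : ℝ)) * b) ^ (1 / (d : ℝ)) with hr
    have hr1 : 1 ≤ r := Real.one_le_rpow hc1 (by positivity)
    have hrd : r ^ d = (1 + d) * b := by
      rw [hr, one_div, Real.rpow_inv_natCast_pow hc0.le hd0']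
    have h := hk' r⁻¹ (by positivity) (inv_le_one_of_one_le₀ hr1)
    refine h.trans (le_of_eq ?_)
    congr 1
    rw [Real.rpow_add (by positivity), Real.rpow_one, mul_assoc,
      ← Real.mul_rpow (by positivity) (by linarith), ← hr, pow_succ, inv_pow, hrd]
    have : b ≠ 0 := by linarith
    have : r ≠ 0 := by linarith
    have : (1 : ℝ) + d ≠ 0 := by positivity
    field_simp
    ring
  · intro hle
    have hb1 := hbpos hle
    have hk' := key hle
    rw [← hcast hle]
    generalize G.minDegree - k = d at *
    have hd1 : (0 : ℝ) < d + 1 := by positivity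
    have hd2 : (1 : ℝ) ≤ d + 1 := by linarith [Nat.cast_nonneg (α := ℝ) d]
    set p : ℝ := (Real.log ((d : ℝ) + 1) + Real.log b) / (d + 1) with hp
    have hp0 : 0 ≤ p := div_nonneg (add_nonneg (Real.log_nonneg hd2) (Real.log_nonneg hb1)) hd1.le
    have hsplit : (Real.log ((d : ℝ) + 1) + Real.log b + 1) / (d + 1) = p + 1 / (d + 1) := by
      rw [hp]; ring
    rw [hsplit]
    have hi : 0 < 1 / ((d : ℝ) + 1) := by positivity
    by_cases hp1 : p ≤ 1
    · refine (hk' (1 - p) (by linarith) (by linarith)).trans ?_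
      apply mul_le_mul_of_nonneg_right _ (Nat.cast_nonneg _)
      have h1 : (1 - p) ^ (d + 1) ≤ Real.exp (-p) ^ (d + 1) :=
        pow_le_pow_left₀ (by linarith) (Real.one_sub_le_exp_neg p) _
      have h2 : Real.exp (-p) ^ (d + 1) = 1 / ((d + 1) * b) := by
        rw [← Real.exp_nat_mul]
        have : ((d + 1 : ℕ) : ℝ) * -p = -Real.log ((d + 1) * b) := by
          rw [Real.log_mul hd1.ne' (by linarith), hp]
          push_cast
          field_simp
        rw [this, Real.exp_neg, Real.exp_log (by positivity), one_div]
      rw [h2] at h1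
      have h3 : b * (1 - p) ^ (d + 1) ≤ b * (1 / ((d + 1) * b)) :=
        mul_le_mul_of_nonneg_left h1 (by linarith)
      have h4 : b * (1 / (((d : ℝ) + 1) * b)) = 1 / (d + 1) := by
        have : b ≠ 0 := by linarith
        field_simp
      linarith
    · refine (hk' 0 le_rfl zero_le_one).trans ?_
      apply mul_le_mul_of_nonneg_right _ (Nat.cast_nonneg _)
      rw [zero_pow (by omega)]
      push Not at hp1
      linarith
end
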